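/- arXiv:1908.03541 — 2 statements merged into one kernel-verified Lean document; each statement's English description precedes it below -/
import Mathlib

section
/- Let (ξ_i)_{i≥1} be real-valued random variables on a probability space with uniformly bounded expectations |Eξ_i| < M for all i, where M is a constant. For each n let J_n be a subset of {1,…,n} with |J_n| = k(n) and 0 ≤ k(n) < n, and suppose k(n)/n → 0 as n → ∞. If (1/n)·∑_{i=1}^n ξ_i − (1/n)·∑_{i=1}^n Eξ_i converges in probability to 0, and moreover for every sequence of index sets the centered averages (1/(n−k(n)))·∑_{i∈{1,…,n}\J_n} ξ_i − (1/(n−k(n)))·∑_{i∈{1,…,n}\J_n} Eξ_i converge in probability to 0, then (1/n)·∑_{i∈{1,…,n}\J_n} ξ_i − (1/n)·∑_{i=1}^n Eξ_i converges in probability to 0 as n → ∞. -/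
open MeasureTheory ProbabilityTheory Filter Topology

/-- Convergence in measure to zero is preserved under domination up to a deterministic
null sequence. -/
theorem tendstoInMeasure_zero_of_norm_le_add {α ι E F : Type*} [MeasurableSpace α]
    [SeminormedAddCommGroup E] [SeminormedAddCommGroup F]
    {μ : Measure α} {l : Filter ι} {f : ι → α → E} {g : ι → α → F} {a : ι → ℝ}
    (hg : TendstoInMeasure μ g l (fun _ => 0)) (ha : Tendsto a l (𝓝 0))
    (hfg : ∀ᶠ n in l, ∀ x, ‖f n x‖ ≤ ‖g n x‖ + a n) :
    TendstoInMeasure μ f l (fun _ => 0) := by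
  rw [tendstoInMeasure_iff_norm] at hg ⊢
  intro ε hε
  refine tendsto_of_tendsto_of_tendsto_of_le_of_le' tendsto_const_nhds (hg (ε / 2) (half_pos hε))
    (Eventually.of_forall fun _ => zero_le) ?_
  filter_upwards [hfg, ha.eventually_lt_const (half_pos hε)] with n hn han
  refine measure_mono fun x hx => ?_
  simp only [sub_zero, Set.mem_ofPred_eq] at hx ⊢
  linarith [hn x]

/-- Rescaling a deleted centered average from `n - #J` to `n` terms and restoring the deleted
centering terms costs at most `M * (#J / n)`. -/
theorem abs_deleted_average_sub_le {n : ℕ} {J : Finset ℕ} (hJ : J ⊆ Finset.Icc 1 n)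
    (hcard : J.card < n) {M : ℝ} (x m : ℕ → ℝ) (hm : ∀ i, |m i| ≤ M) :
    |(1 / n : ℝ) * ∑ i ∈ Finset.Icc 1 n \ J, x i - (1 / n : ℝ) * ∑ i ∈ Finset.Icc 1 n, m i| ≤
      |(1 / ((n - J.card : ℕ) : ℝ)) * ∑ i ∈ Finset.Icc 1 n \ J, x i
        - (1 / ((n - J.card : ℕ) : ℝ)) * ∑ i ∈ Finset.Icc 1 n \ J, m i| + M * (J.card / n) := by
  have hn : (0 : ℝ) < n := by exact_mod_cast (Nat.zero_le _).trans_lt hcard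
  have hd : (0 : ℝ) < (n - J.card : ℕ) := by exact_mod_cast Nat.sub_pos_of_lt hcard
  have hdn : ((n - J.card : ℕ) : ℝ) ≤ n := by exact_mod_cast Nat.sub_le _ _
  have hsum : |∑ i ∈ J, m i| ≤ M * J.card := by
    calc |∑ i ∈ J, m i| ≤ ∑ i ∈ J, |m i| := Finset.abs_sum_le_sum_abs _ _
      _ ≤ J.card • M := Finset.sum_le_card_nsmul _ _ _ fun i _ => hm i
      _ = M * J.card := by rw [nsmul_eq_mul, mul_comm]
  rw [← Finset.sum_sdiff hJ (f := m)]
  set d : ℝ := ((n - J.card : ℕ) : ℝ)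
  set X := ∑ i ∈ Finset.Icc 1 n \ J, x i
  set A := ∑ i ∈ Finset.Icc 1 n \ J, m i
  set B := ∑ i ∈ J, m i
  have hsplit : 1 / (n : ℝ) * X - 1 / n * (A + B) =
      d / n * (1 / d * X - 1 / d * A) - B / n := by
    field_simp
    ring
  rw [hsplit]
  refine (abs_sub _ _).trans (add_le_add ?_ ?_)
  · rw [abs_mul, abs_of_pos (div_pos hd hn)]
    exact mul_le_of_le_one_left (abs_nonneg _) ((div_le_one hn).2 hdn)
  · rw [abs_div, abs_of_pos hn, ← mul_div_assoc]
    gcongr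

/-- Uniform deleting-items WLLN (transfer of a WLLN to deleting-items sums). -/
theorem uniform_deleting_items_WLLN
    {Ω : Type*} [MeasureSpace Ω] [IsProbabilityMeasure (ℙ : Measure Ω)]
    (ξ : ℕ → Ω → ℝ) (hmeas : ∀ i, Measurable (ξ i))
    (M : ℝ) (hmean : ∀ i, |𝔼[ξ i]| < M)
    (k : ℕ → ℕ) (J : ℕ → Finset ℕ)
    (hJ : ∀ n, J n ⊆ Finset.Icc 1 n)
    (hJcard : ∀ n, (J n).card = k n)
    (hk : ∀ n, 1 ≤ n → k n < n)
    (hklim : Tendsto (fun (n : ℕ) => (k n : ℝ) / n) atTop (𝓝 0))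
    (hWLLN : TendstoInMeasure ℙ
      (fun (n : ℕ) (ω : Ω) => (1 / n : ℝ) * ∑ i ∈ Finset.Icc 1 n, ξ i ω
        - (1 / n : ℝ) * ∑ i ∈ Finset.Icc 1 n, 𝔼[ξ i])
      atTop (fun _ => (0 : ℝ)))
    (hWLLNdel : ∀ K : ℕ → Finset ℕ, (∀ n, K n ⊆ Finset.Icc 1 n) →
      (∀ n, (K n).card = k n) →
      TendstoInMeasure ℙ
        (fun (n : ℕ) (ω : Ω) =>
          (1 / ((n - k n : ℕ) : ℝ)) * ∑ i ∈ Finset.Icc 1 n \ K n, ξ i ω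
          - (1 / ((n - k n : ℕ) : ℝ)) * ∑ i ∈ Finset.Icc 1 n \ K n, 𝔼[ξ i])
        atTop (fun _ => (0 : ℝ))) :
    TendstoInMeasure ℙ
      (fun (n : ℕ) (ω : Ω) => (1 / n : ℝ) * ∑ i ∈ Finset.Icc 1 n \ J n, ξ i ω
        - (1 / n : ℝ) * ∑ i ∈ Finset.Icc 1 n, 𝔼[ξ i])
      atTop (fun _ => (0 : ℝ)) := by
  refine tendstoInMeasure_zero_of_norm_le_add (hWLLNdel J hJ hJcard)
    (a := fun n => M * ((k n : ℝ) / n)) (by simpa using hklim.const_mul M) ?_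
  filter_upwards [eventually_ge_atTop 1] with n hn ω
  have hcard : (J n).card < n := (hJcard n).trans_lt (hk n hn)
  simpa only [Real.norm_eq_abs, hJcard n] using
    abs_deleted_average_sub_le (hJ n) hcard (fun i => ξ i ω) (fun i => 𝔼[ξ i])
      fun i => (hmean i).le
end

section
/- Let (ξ_i)_{i≥1} be pairwise independent identically distributed real-valued random variables on a probability space with E|ξ_i| < ∞ and Eξ_i = μ. For each n let J_n be a subset of {1,…,n} with |J_n| = k(n) and 0 ≤ k(n) < n, and suppose k(n)/n → 0 as n → ∞. Then (1/n)·∑_{i∈{1,…,n}\J_n} ξ_i → μ almost surely as n → ∞. -/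
open MeasureTheory ProbabilityTheory Filter Topology

/-- The strong law of large numbers for a measurable function of a pairwise independent,
identically distributed sequence, with sums over `{1, …, n}`. -/
lemma strong_law_ae_comp_Icc {Ω : Type*} [MeasurableSpace Ω] {P : Measure Ω}
    {ξ : ℕ → Ω → ℝ} (hindep : Pairwise (fun i j => IndepFun (ξ i) (ξ j) P))
    (hident : ∀ i j, IdentDistrib (ξ i) (ξ j) P P)
    {g : ℝ → ℝ} (hg : Measurable g) (hint : Integrable (fun ω => g (ξ 1 ω)) P) :
    ∀ᵐ ω ∂P, Tendsto (fun n : ℕ => (∑ i ∈ Finset.Icc 1 n, g (ξ i ω)) / n) atTop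
      (𝓝 (∫ ω, g (ξ 1 ω) ∂P)) := by
  have key := strong_law_ae_real (μ := P) (fun i ω => g (ξ (i + 1) ω)) hint
    (fun i j hij => (hindep (by simpa using hij : i + 1 ≠ j + 1)).comp hg hg)
    (fun i => (hident (i + 1) 1).comp hg)
  filter_upwards [key] with ω hω
  refine hω.congr fun n => ?_
  rw [Finset.range_eq_Ico, Finset.sum_Ico_add' (fun i => g (ξ i ω)) 0 n 1, zero_add,
    Finset.Ico_add_one_right_eq_Icc]

/-- The expected excess of `|X|` over the level `M` vanishes as `M → ∞`. -/
lemma tendsto_integral_excess {Ω : Type*} [MeasurableSpace Ω] {P : Measure Ω}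
    {X : Ω → ℝ} (hX : Integrable X P) :
    Tendsto (fun M : ℕ => ∫ ω, max (|X ω| - M) 0 ∂P) atTop (𝓝 0) := by
  suffices h : Tendsto (fun M : ℕ => ∫ ω, max (|X ω| - M) 0 ∂P) atTop (𝓝 (∫ _, (0 : ℝ) ∂P)) by
    simpa only [integral_zero] using h
  refine tendsto_integral_of_dominated_convergence (fun ω => |X ω|) (fun M => ?_) hX.abs
    (fun M => ?_) ?_
  · exact ((hX.abs.aestronglyMeasurable.aemeasurable.sub_const _).max
      aemeasurable_const).aestronglyMeasurable
  · refine .of_forall fun ω => ?_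
    rw [Real.norm_eq_abs, abs_of_nonneg (le_max_right _ _)]
    exact max_le (by simp) (abs_nonneg _)
  · refine .of_forall fun ω => tendsto_const_nhds.congr' ?_
    filter_upwards [tendsto_natCast_atTop_atTop.eventually_ge_atTop |X ω|] with M hM
    exact (max_eq_right (by linarith)).symm

/-- If the averaged excesses of `|x i|` over the level `M` converge to limits that vanish as
`M → ∞`, then sums of `x` over index sets of negligible density are negligible. -/
lemma tendsto_sum_div_of_card_div_tendsto_zero {x c : ℕ → ℝ} {J : ℕ → Finset ℕ}
    (hJ : ∀ n, J n ⊆ Finset.Icc 1 n)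
    (hcard : Tendsto (fun n : ℕ => ((J n).card : ℝ) / n) atTop (𝓝 0))
    (hc : Tendsto c atTop (𝓝 0))
    (hx : ∀ M : ℕ, Tendsto (fun n : ℕ => (∑ i ∈ Finset.Icc 1 n, max (|x i| - M) 0) / n) atTop
      (𝓝 (c M))) :
    Tendsto (fun n : ℕ => (∑ i ∈ J n, x i) / n) atTop (𝓝 0) := by
  have bound (M n : ℕ) : |(∑ i ∈ J n, x i) / n| ≤
      M * (((J n).card : ℝ) / n) + (∑ i ∈ Finset.Icc 1 n, max (|x i| - M) 0) / n := by
    rw [abs_div, Nat.abs_cast, ← mul_div_assoc, ← add_div]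
    gcongr
    calc |∑ i ∈ J n, x i| ≤ ∑ i ∈ J n, |x i| := Finset.abs_sum_le_sum_abs _ _
      _ ≤ ∑ i ∈ J n, ((M : ℝ) + max (|x i| - M) 0) :=
          Finset.sum_le_sum fun i _ => by linarith [le_max_left (|x i| - M) 0]
      _ = M * (J n).card + ∑ i ∈ J n, max (|x i| - M) 0 := by
          rw [Finset.sum_add_distrib, Finset.sum_const, nsmul_eq_mul, mul_comm]
      _ ≤ M * (J n).card + ∑ i ∈ Finset.Icc 1 n, max (|x i| - M) 0 :=
          add_le_add le_rfl <|
            Finset.sum_le_sum_of_subset_of_nonneg (hJ n) fun i _ _ => le_max_right _ _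
  rw [Metric.tendsto_nhds]
  intro ε hε
  obtain ⟨M, hM⟩ := (hc.eventually_lt_const hε).exists
  have hlim := (hcard.const_mul (M : ℝ)).add (hx M)
  rw [mul_zero, zero_add] at hlim
  filter_upwards [hlim.eventually_lt_const hM] with n hn
  rw [Real.dist_eq, sub_zero]
  exact (bound M n).trans_lt hn

/-- Deleting-items strong law of large numbers. -/
theorem deleting_items_SLLN
    {Ω : Type*} [MeasureSpace Ω] [IsProbabilityMeasure (ℙ : Measure Ω)]
    (ξ : ℕ → Ω → ℝ) (hmeas : ∀ i, Measurable (ξ i))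
    (hindep : Pairwise (fun i j => IndepFun (ξ i) (ξ j) ℙ))
    (hident : ∀ i j, IdentDistrib (ξ i) (ξ j) ℙ ℙ)
    (μ : ℝ) (hint : ∀ i, Integrable (ξ i) ℙ) (hmean : ∀ i, 𝔼[ξ i] = μ)
    (k : ℕ → ℕ) (J : ℕ → Finset ℕ)
    (hJ : ∀ n, J n ⊆ Finset.Icc 1 n)
    (hJcard : ∀ n, (J n).card = k n)
    (hk : ∀ n, 1 ≤ n → k n < n)
    (hklim : Tendsto (fun (n : ℕ) => (k n : ℝ) / n) atTop (𝓝 0)) :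
    ∀ᵐ ω ∂ℙ, Tendsto
      (fun (n : ℕ) => (1 / n : ℝ) * ∑ i ∈ Finset.Icc 1 n \ J n, ξ i ω)
      atTop (𝓝 μ) := by
  have hmain := strong_law_ae_comp_Icc hindep hident measurable_id (hint 1)
  have hexcess := ae_all_iff.2 fun M : ℕ => strong_law_ae_comp_Icc hindep hident
    (g := fun y => max (|y| - M) 0) (by fun_prop)
    ((hint 1).abs.sub (integrable_const _)).pos_part
  filter_upwards [hmain, hexcess] with ω hω hωM
  simp only [id, hmean] at hω
  have hdel := tendsto_sum_div_of_card_div_tendsto_zero hJ (by simpa only [hJcard] using hklim)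
    (tendsto_integral_excess (hint 1)) hωM
  have hsub := hω.sub hdel
  rw [sub_zero] at hsub
  refine hsub.congr fun n => ?_
  rw [← Finset.sum_sdiff (hJ n)]
  ring
end
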